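/- Let f(z) = z + Σ_{n≥2} a_n z^n and g(z) = z + Σ_{n≥2} b_n z^n be analytic on the unit disk 𝔻, with f and g nonvanishing on the punctured disk 0 < |z| < 1, and suppose |a_n| ≤ n and |b_n| ≤ 1 for all n ≥ 2. Then the function F(z) = z^3/(f(z)g(z)) satisfies |F'(z)(z/F(z))^2 − 1| < 1 for every z with 0 < |z| < 1/4; in particular F belongs to the class 𝒰 in the disk |z| < 1/4. -/

import Mathlib

/-!
Write `p = f / z`, `q = g / z`, with coefficients `a (i + 1)`, `b (j + 1)`. Since `F = z / (p q)`,
the quotient rule gives `F' (z / F) ^ 2 = 3 p q - f' q - p g'`, which expands as the double series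
`∑ a (i + 1) b (j + 1) (1 - i - j) z ^ (i + j)`. Its `(0, 0)` term is `1`; every other term is
at most `(i + 1) (i + j - 1) r ^ (i + j)` in absolute value, `r = ‖z‖`, and this majorant sums to
`1 + (4 r - 1) / (1 - r) ^ 4`, which is less than `1` exactly when `r < 1 / 4`.
The double series is `hasSum_double` and its majorant `hasSum_majorant`.
-/

lemma hasSum_mul_prod {K : Type*} [RCLike K] {u v : ℕ → K} {s t : K}
    (hu : HasSum u s) (hv : HasSum v t) :
    HasSum (fun x : ℕ × ℕ => u x.1 * v x.2) (s * t) :=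
  hu.mul hv (summable_mul_of_summable_norm hu.summable.norm hv.summable.norm)

/-- A power series vanishing at `0`, divided by `z`. -/
lemma hasSum_shift {c : ℕ → ℂ} {z s : ℂ} (hz : z ≠ 0) (hc : c 0 = 0)
    (h : HasSum (fun n : ℕ => c n * z ^ n) s) :
    HasSum (fun n : ℕ => c (n + 1) * z ^ n) (s / z) := by
  have h1 : HasSum (fun n : ℕ => c (n + 1) * z ^ (n + 1)) s := by
    rw [hasSum_nat_add_iff (f := fun n : ℕ => c n * z ^ n) 1]
    simpa [hc] using h
  refine (h1.div_const z).congr_fun fun n => ?_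
  field_simp
  ring

/-- Termwise differentiation on the disk `‖z‖ < 1 / 4`. -/
lemma hasSum_deriv_coeff {f : ℂ → ℂ} {c : ℕ → ℂ} (hc : ∀ n : ℕ, ‖c n‖ ≤ (n : ℝ))
    (hf : ∀ z ∈ Metric.ball (0:ℂ) 1, HasSum (fun n : ℕ => c n * z ^ n) (f z))
    {z : ℂ} (hz : ‖z‖ < 1 / 4) :
    HasSum (fun n : ℕ => ((n : ℂ) + 1) * c (n + 1) * z ^ n) (deriv f z) := by
  have hu : Summable (fun n : ℕ => (n : ℝ) * (1 / 4 : ℝ) ^ n) :=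
    (hasSum_coe_mul_geometric_of_norm_lt_one (by norm_num)).summable
  have hzU : z ∈ Metric.ball (0:ℂ) (1 / 4) := by simpa using hz
  have h := Complex.hasSum_deriv_of_summable_norm (F := fun (n : ℕ) (w : ℂ) => c n * w ^ n) hu
    (fun n => by fun_prop) Metric.isOpen_ball
    (fun n w hw => by
      have hw' : ‖w‖ ≤ 1 / 4 := by simpa using (Metric.mem_ball.1 hw).le
      rw [norm_mul, norm_pow]
      gcongr
      exact hc n) hzU
  have hev : (fun w => ∑' n : ℕ, c n * w ^ n) =ᶠ[nhds z] f := by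
    filter_upwards [Metric.isOpen_ball.mem_nhds hzU] with w hw
    exact (hf w (Metric.ball_subset_ball (by norm_num) hw)).tsum_eq
  rw [hev.deriv_eq] at h
  have h2 : HasSum (fun n : ℕ => (n : ℂ) * c n * z ^ (n - 1)) (deriv f z) := by
    refine h.congr_fun fun n => ?_
    simp
    ring
  have h3 := (hasSum_nat_add_iff (f := fun n : ℕ => (n : ℂ) * c n * z ^ (n - 1)) (g := deriv f z) 1).2
    (by simpa using h2)
  simpa using h3

lemma hasSum_double {a b : ℕ → ℂ} {z p q p' q' : ℂ}
    (hp : HasSum (fun n : ℕ => a (n + 1) * z ^ n) p)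
    (hq : HasSum (fun n : ℕ => b (n + 1) * z ^ n) q)
    (hp' : HasSum (fun n : ℕ => ((n : ℂ) + 1) * a (n + 1) * z ^ n) p')
    (hq' : HasSum (fun n : ℕ => ((n : ℂ) + 1) * b (n + 1) * z ^ n) q') :
    HasSum (fun x : ℕ × ℕ => a (x.1 + 1) * b (x.2 + 1) * (1 - x.1 - x.2) * z ^ (x.1 + x.2))
      (3 * (p * q) - p' * q - p * q') := by
  refine ((((hasSum_mul_prod hp hq).mul_left 3).sub (hasSum_mul_prod hp' hq)).sub
    (hasSum_mul_prod hp hq')).congr_fun fun x => ?_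
  rw [pow_add]
  ring

lemma hasSum_majorant {r : ℝ} (h0 : 0 ≤ r) (h1 : r < 1) :
    HasSum (fun x : ℕ × ℕ => ((x.1 : ℝ) + 1) * ((x.1 : ℝ) + x.2 - 1) * r ^ (x.1 + x.2))
      ((4 * r - 1) / (1 - r) ^ 4) := by
  have hr : ‖r‖ < 1 := by rwa [Real.norm_of_nonneg h0]
  have hne : 1 - r ≠ 0 := by linarith
  have hQ : HasSum (fun n : ℕ => r ^ n) (1 - r)⁻¹ := hasSum_geometric_of_norm_lt_one hr
  have hQ' : HasSum (fun n : ℕ => (n : ℝ) * r ^ n) (r / (1 - r) ^ 2) :=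
    hasSum_coe_mul_geometric_of_norm_lt_one hr
  have hP : HasSum (fun n : ℕ => ((n : ℝ) + 1) * r ^ n) (r / (1 - r) ^ 2 + (1 - r)⁻¹) :=
    (hQ'.add hQ).congr_fun fun n => by ring
  have hP2 := hasSum_choose_mul_geometric_of_norm_lt_one 2 hr
  -- `i (i + 1) = 2 * choose (i + 2) 2 - 2 (i + 1)`
  have hP' : HasSum (fun n : ℕ => (n : ℝ) * ((n : ℝ) + 1) * r ^ n)
      (2 * (1 / (1 - r) ^ (2 + 1)) - 2 * (r / (1 - r) ^ 2 + (1 - r)⁻¹)) := by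
    refine ((hP2.mul_left 2).sub (hP.mul_left 2)).congr_fun fun n => ?_
    rw [Nat.cast_choose_two]
    push_cast
    ring
  have h := ((hasSum_mul_prod hP' hQ).add (hasSum_mul_prod hP hQ')).sub (hasSum_mul_prod hP hQ)
  have h' := h.congr_fun (g := fun x : ℕ × ℕ =>
    ((x.1 : ℝ) + 1) * ((x.1 : ℝ) + x.2 - 1) * r ^ (x.1 + x.2)) fun x => by
      rw [pow_add]
      ring
  have hval : (4 * r - 1) / (1 - r) ^ 4 =
      (2 * (1 / (1 - r) ^ (2 + 1)) - 2 * (r / (1 - r) ^ 2 + (1 - r)⁻¹)) * (1 - r)⁻¹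
        + (r / (1 - r) ^ 2 + (1 - r)⁻¹) * (r / (1 - r) ^ 2)
        - (r / (1 - r) ^ 2 + (1 - r)⁻¹) * (1 - r)⁻¹ := by
    field_simp
    ring
  rwa [hval]

theorem radius_univalence_coeff_n_one
    (f g F : ℂ → ℂ) (a b : ℕ → ℂ)
    (hfa : AnalyticOnNhd ℂ f (Metric.ball (0:ℂ) 1))
    (hga : AnalyticOnNhd ℂ g (Metric.ball (0:ℂ) 1))
    (ha0 : a 0 = 0) (ha1 : a 1 = 1) (hb0 : b 0 = 0) (hb1 : b 1 = 1)
    (hf : ∀ z ∈ Metric.ball (0:ℂ) 1, HasSum (fun n : ℕ => a n * z ^ n) (f z))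
    (hg : ∀ z ∈ Metric.ball (0:ℂ) 1, HasSum (fun n : ℕ => b n * z ^ n) (g z))
    (hfne : ∀ z : ℂ, 0 < ‖z‖ → ‖z‖ < 1 → f z ≠ 0)
    (hgne : ∀ z : ℂ, 0 < ‖z‖ → ‖z‖ < 1 → g z ≠ 0)
    (hA : ∀ n : ℕ, 2 ≤ n → ‖a n‖ ≤ (n : ℝ))
    (hB : ∀ n : ℕ, 2 ≤ n → ‖b n‖ ≤ 1)
    (hF : ∀ z : ℂ, F z = z ^ 3 / (f z * g z)) :
    ∀ z : ℂ, 0 < ‖z‖ → ‖z‖ < 1 / 4 →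
      ‖deriv F z * (z / F z) ^ 2 - 1‖ < 1 := by
  intro z hz0 hz
  have hz1 : ‖z‖ < 1 := by linarith
  have hzb : z ∈ Metric.ball (0:ℂ) 1 := by simpa using hz1
  have hzne : z ≠ 0 := norm_pos_iff.1 hz0
  have hfz := hfne z hz0 hz1
  have hgz := hgne z hz0 hz1
  have hA' : ∀ n : ℕ, ‖a n‖ ≤ (n : ℝ) := by
    rintro (_ | _ | n)
    · simp [ha0]
    · simp [ha1]
    · exact hA _ (by omega)
  have hB1 : ∀ n : ℕ, ‖b (n + 1)‖ ≤ 1 := by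
    rintro (_ | n)
    · simp [hb1]
    · exact hB _ (by omega)
  have hB' : ∀ n : ℕ, ‖b n‖ ≤ (n : ℝ) := by
    rintro (_ | n)
    · simp [hb0]
    · exact (hB1 n).trans (by push_cast; linarith [n.cast_nonneg (α := ℝ)])
  have hU : deriv F z * (z / F z) ^ 2
      = 3 * (f z / z * (g z / z)) - deriv f z * (g z / z) - f z / z * deriv g z := by
    have hd := (hasDerivAt_pow 3 z).fun_div ((hfa z hzb).differentiableAt.hasDerivAt.fun_mul
      (hga z hzb).differentiableAt.hasDerivAt) (mul_ne_zero hfz hgz)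
    rw [hF z, funext hF, hd.deriv]
    field_simp
    push_cast
    ring
  have hS := hasSum_double (hasSum_shift hzne ha0 (hf z hzb)) (hasSum_shift hzne hb0 (hg z hzb))
    (hasSum_deriv_coeff hA' hf hz) (hasSum_deriv_coeff hB' hg hz)
  rw [← hU] at hS
  -- The constant term equals `1`, while the majorant's is `-1`: remove both.
  have hS1 := hS.sub (hasSum_ite_eq ((0, 0) : ℕ × ℕ) (1 : ℂ))
  have hM1 := (hasSum_majorant hz0.le hz1).add (hasSum_ite_eq ((0, 0) : ℕ × ℕ) (1 : ℝ))
  have hle := hS1.norm_le_of_bounded hM1 (by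
    rintro ⟨i, j⟩
    by_cases hij : i = 0 ∧ j = 0
    · obtain ⟨rfl, rfl⟩ := hij
      simp [ha1, hb1]
    · have hij1 : (1 : ℝ) ≤ (i : ℝ) + j := by
        have : 1 ≤ i + j := by omega
        exact_mod_cast this
      have hn : ‖(1 - i - j : ℂ)‖ = (i : ℝ) + j - 1 := by
        have : (1 - i - j : ℂ) = ((-((i : ℝ) + j - 1) : ℝ) : ℂ) := by push_cast; ring
        rw [this, Complex.norm_real, norm_neg, Real.norm_of_nonneg (by linarith)]
      have hne : ((i, j) : ℕ × ℕ) ≠ (0, 0) := by simpa using hij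
      simp only [hne, if_false, sub_zero, add_zero, norm_mul, norm_pow, hn]
      have hi : ‖a (i + 1)‖ * ‖b (j + 1)‖ ≤ ((i : ℝ) + 1) * 1 :=
        mul_le_mul (by exact_mod_cast hA' (i + 1)) (hB1 j) (norm_nonneg _) (by positivity)
      rw [mul_one] at hi
      have : 0 ≤ (i : ℝ) + j - 1 := by linarith
      gcongr)
  have hneg : (4 * ‖z‖ - 1) / (1 - ‖z‖) ^ 4 < 0 :=
    div_neg_of_neg_of_pos (by linarith) (pow_pos (by linarith) 4)
  linarith
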